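/- There exists a 2-(24,4,1) packing with 42 blocks whose leave is a vertex-disjoint union of one cycle of length 11 and one cycle of length 13, covering all 24 points (leave type 11^1 13^1). -/

import Mathlib

/-!
The packing is given explicitly. Its points are labelled so that the leave consists of the
cycles `0, 1, …, 10` and `11, 12, …, 23`, each traversed in increasing order. Being a finite
object, it is verified by evaluation of one fact (`blocksThrough_check`): through a pair of
distinct points passes no block if the points are consecutive on one of the two cycles, and
exactly one block otherwise. This gives both the packing property and the leave. The 42 blocks
cover `42 * 6 = 252` of the 276 pairs, which leaves the `11 + 13 = 24` edges of the two cycles.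

Blocks are stored as lists of natural numbers, because arithmetic on numerals is cheap to
evaluate in the kernel; `toSet` turns them into sets of points.
-/

/-- A 2-(24,4,1) packing: a collection of 4-element blocks on 24 points such that
every pair of distinct points lies in at most one block. -/
def IsPacking (B : Finset (Finset (Fin 24))) : Prop :=
  (∀ b ∈ B, b.card = 4) ∧
  ∀ p q : Fin 24, p ≠ q → ∀ b₁ ∈ B, ∀ b₂ ∈ B,
    p ∈ b₁ → q ∈ b₁ → p ∈ b₂ → q ∈ b₂ → b₁ = b₂

/-- Adjacency in the leave of a packing: the pair of distinct points is covered by no block. -/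
def LeaveAdj (B : Finset (Finset (Fin 24))) (p q : Fin 24) : Prop :=
  p ≠ q ∧ ∀ b ∈ B, ¬ (p ∈ b ∧ q ∈ b)

/-- The leave of the packing `B` is a vertex-disjoint union of cycles whose lengths are
given by the list `L`, covering all 24 points. -/
def LeaveIsCycleType (B : Finset (Finset (Fin 24))) (L : List ℕ) : Prop :=
  ∃ f : (i : Fin L.length) → ZMod (L.get i) → Fin 24,
    Function.Bijective (fun x : Σ i : Fin L.length, ZMod (L.get i) => f x.1 x.2) ∧
    ∀ p q : Fin 24, LeaveAdj B p q ↔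
      ∃ i k, (p = f i k ∧ q = f i (k + 1)) ∨ (q = f i k ∧ p = f i (k + 1))

/-- The 42 blocks of a packing with leave of type `11^1 13^1`. -/
def blocks : List (List ℕ) :=
  [[0, 2, 15, 22], [0, 3, 12, 17], [0, 4, 8, 18], [0, 5, 7, 13], [0, 6, 19, 21], [0, 9, 14, 23],
   [0, 11, 16, 20], [1, 3, 11, 13], [1, 4, 16, 22], [1, 5, 14, 18], [1, 6, 12, 15], [1, 7, 9, 21],
   [1, 8, 10, 19], [1, 17, 20, 23], [2, 4, 7, 23], [2, 5, 12, 19], [2, 6, 9, 17], [2, 8, 11, 14],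
   [2, 10, 13, 20], [2, 16, 18, 21], [3, 5, 9, 22], [3, 6, 8, 16], [3, 7, 18, 20], [3, 10, 14, 21],
   [3, 15, 19, 23], [4, 6, 10, 11], [4, 9, 12, 20], [4, 13, 15, 21], [4, 14, 17, 19], [5, 8, 15, 20],
   [5, 10, 16, 23], [5, 11, 17, 21], [6, 13, 18, 23], [6, 14, 20, 22], [7, 10, 15, 17], [7, 11, 19, 22],
   [7, 12, 14, 16], [8, 12, 21, 23], [8, 13, 17, 22], [9, 11, 15, 18], [9, 13, 16, 19], [10, 12, 18, 22]]

/-- The set of points listed in `l`. -/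
def toSet (l : List ℕ) : Finset (Fin 24) :=
  Finset.univ.filter fun p => p.val ∈ l

/-- The successor of a point on its leave cycle: `0 → 1 → ⋯ → 10 → 0` and
`11 → 12 → ⋯ → 23 → 11`. -/
def next (p : ℕ) : ℕ :=
  bif p == 10 then 0 else bif p == 23 then 11 else p + 1

/-- The blocks that contain both `p` and `q`. -/
def blocksThrough (p q : ℕ) : List (List ℕ) :=
  blocks.filter fun l => l.elem p && l.elem q

/-- The inclusion of the `i`-th leave cycle: `k ↦ k` on the 11-cycle and `k ↦ 11 + k` on the
13-cycle, with `ZMod 11` and `ZMod 13` unfolding to `Fin 11` and `Fin 13`. -/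
def cyclePoint : (i : Fin [11, 13].length) → ZMod ([11, 13].get i) → Fin 24
  | 0, k => Fin.castLE (n := 11) (by decide) k
  | 1, k => Fin.natAdd (m := 13) 11 k

theorem mem_toSet {l : List ℕ} {p : Fin 24} : p ∈ toSet l ↔ p.val ∈ l := by
  simp [toSet]

theorem mem_blocksThrough {l : List ℕ} {p q : ℕ} :
    l ∈ blocksThrough p q ↔ l ∈ blocks ∧ p ∈ l ∧ q ∈ l := by
  simp [blocksThrough]

theorem blocksThrough_check :
    ((List.range 24).all fun p => (List.range 24).all fun q => p == q ||
      (blocksThrough p q).length == bif q == next p || p == next q then 0 else 1) = true := by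
  decide +kernel

theorem length_blocksThrough {p q : Fin 24} (hpq : p ≠ q) :
    (blocksThrough p q).length = if q.val = next p ∨ p.val = next q then 0 else 1 := by
  have h := List.all_eq_true.1 (List.all_eq_true.1 blocksThrough_check p
    (List.mem_range.2 p.isLt)) q (List.mem_range.2 q.isLt)
  have hne : p.val ≠ q.val := fun h => hpq (Fin.ext h)
  simpa [hne, Bool.cond_eq_ite] using h

theorem eq_of_mem_blocks {p q : Fin 24} (hpq : p ≠ q) {l m : List ℕ}
    (hl : l ∈ blocks) (hm : m ∈ blocks) (hpl : p.val ∈ l) (hql : q.val ∈ l)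
    (hpm : p.val ∈ m) (hqm : q.val ∈ m) : l = m := by
  have hl' := mem_blocksThrough.2 ⟨hl, hpl, hql⟩
  have hm' := mem_blocksThrough.2 ⟨hm, hpm, hqm⟩
  have hlen := length_blocksThrough hpq
  have hone : (blocksThrough p q).length ≤ 1 := by
    rw [hlen]
    split_ifs <;> simp
  have hsingle : (blocksThrough p q).length = 1 :=
    le_antisymm hone (List.length_pos_of_mem hl')
  obtain ⟨b, hb⟩ := List.length_eq_one_iff.1 hsingle
  rw [hb, List.mem_singleton] at hl' hm'
  rw [hl', hm']

theorem blocks_nodup : blocks.Nodup := by decide +kernel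

theorem block_shape : ∀ l ∈ blocks, l.Nodup ∧ l.length = 4 ∧ ∀ x ∈ l, x < 24 := by
  decide +kernel

theorem card_toSet {l : List ℕ} (hl : l ∈ blocks) : (toSet l).card = 4 := by
  obtain ⟨hnodup, hlen, hlt⟩ := block_shape l hl
  have h : (toSet l).map Fin.valEmbedding = l.toFinset := by
    ext x
    simp only [Finset.mem_map, mem_toSet, Fin.valEmbedding_apply, List.mem_toFinset]
    exact ⟨fun ⟨p, hp, hx⟩ => hx ▸ hp, fun hx => ⟨⟨x, hlt x hx⟩, hx, rfl⟩⟩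
  rw [← Finset.card_map Fin.valEmbedding, h, List.toFinset_card_of_nodup hnodup, hlen]

theorem toSet_injOn {l m : List ℕ} (hl : l ∈ blocks) (hm : m ∈ blocks)
    (h : toSet l = toSet m) : l = m := by
  obtain ⟨p, hp, q, hq, hpq⟩ := Finset.one_lt_card.1 (by rw [card_toSet hl]; omega :
    1 < (toSet l).card)
  exact eq_of_mem_blocks hpq hl hm (mem_toSet.1 hp) (mem_toSet.1 hq)
    (mem_toSet.1 (h ▸ hp)) (mem_toSet.1 (h ▸ hq))

theorem next_ne : ∀ p : Fin 24, p.val ≠ next p := by decide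

theorem leaveAdj_iff (p q : Fin 24) :
    LeaveAdj (blocks.map toSet).toFinset p q ↔ (q.val = next p ∨ p.val = next q) := by
  by_cases hpq : p = q
  · subst hpq
    simp [LeaveAdj, next_ne p]
  · have hlen := length_blocksThrough hpq
    have hempty : LeaveAdj (blocks.map toSet).toFinset p q ↔ (blocksThrough p q).length = 0 := by
      simp [LeaveAdj, hpq, mem_toSet, blocksThrough]
    rw [hempty, hlen]
    split_ifs with h <;> simp [h]

theorem cyclePoint_succ : ∀ i k, (cyclePoint i (k + 1)).val = next (cyclePoint i k) := by
  refine Fin.forall_fin_two.2 ⟨?_, ?_⟩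
  · change ∀ k : Fin 11, (k + 1).val = next k.val
    decide
  · change ∀ k : Fin 13, 11 + (k + 1).val = next (11 + k.val)
    decide

theorem exists_cyclePoint_eq (p : Fin 24) : ∃ i k, cyclePoint i k = p := by
  have h : (∃ k : Fin 11, Fin.castLE (n := 11) (by decide) k = p) ∨
      ∃ k : Fin 13, Fin.natAdd (m := 13) 11 k = p := by
    revert p
    decide
  rcases h with ⟨k, hk⟩ | ⟨k, hk⟩
  · exact ⟨0, k, hk⟩
  · exact ⟨1, k, hk⟩

theorem bijective_cyclePoint : Function.Bijective
    (fun x : Σ i : Fin [11, 13].length, ZMod ([11, 13].get i) => cyclePoint x.1 x.2) := by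
  have hsurj : Function.Surjective
      (fun x : Σ i : Fin [11, 13].length, ZMod ([11, 13].get i) => cyclePoint x.1 x.2) :=
    fun p => let ⟨i, k, h⟩ := exists_cyclePoint_eq p; ⟨⟨i, k⟩, h⟩
  refine ⟨?_, hsurj⟩
  rintro ⟨i, k⟩ ⟨j, l⟩ h
  replace h := congrArg Fin.val h
  revert i j
  refine Fin.forall_fin_two.2 ⟨fun k => Fin.forall_fin_two.2 ⟨fun l h => ?_, fun l h => ?_⟩,
    fun k => Fin.forall_fin_two.2 ⟨fun l h => ?_, fun l h => ?_⟩⟩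
  · exact congrArg (Sigma.mk 0) (Fin.ext (n := 11) h)
  · have hk : Fin.val (n := 11) k < 11 := Fin.isLt (n := 11) k
    change Fin.val (n := 11) k = 11 + Fin.val (n := 13) l at h
    omega
  · have hl : Fin.val (n := 11) l < 11 := Fin.isLt (n := 11) l
    change 11 + Fin.val (n := 13) k = Fin.val (n := 11) l at h
    omega
  · exact congrArg (Sigma.mk 1) (Fin.ext (n := 13) (Nat.add_left_cancel h))

/-- There is a 2-(24,4,1) packing with 42 blocks whose leave is a vertex-disjoint
union of cycles of lengths [11, 13], covering all 24 points. -/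
theorem exists_max_packing_with_leave_type :
    ∃ B : Finset (Finset (Fin 24)), IsPacking B ∧ B.card = 42 ∧
      LeaveIsCycleType B [11, 13] := by
  refine ⟨(blocks.map toSet).toFinset, ⟨?_, ?_⟩, ?_, cyclePoint, bijective_cyclePoint, ?_⟩
  · intro b hb
    obtain ⟨l, hl, rfl⟩ := List.mem_map.1 (List.mem_toFinset.1 hb)
    exact card_toSet hl
  · intro p q hpq b₁ h₁ b₂ h₂ hp₁ hq₁ hp₂ hq₂
    obtain ⟨l, hl, rfl⟩ := List.mem_map.1 (List.mem_toFinset.1 h₁)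
    obtain ⟨m, hm, rfl⟩ := List.mem_map.1 (List.mem_toFinset.1 h₂)
    rw [mem_toSet] at hp₁ hq₁ hp₂ hq₂
    rw [eq_of_mem_blocks hpq hl hm hp₁ hq₁ hp₂ hq₂]
  · rw [List.toFinset_card_of_nodup
      (blocks_nodup.map_on fun l hl m hm h => toSet_injOn hl hm h), List.length_map]
    rfl
  · intro p q
    refine (leaveAdj_iff p q).trans ⟨?_, ?_⟩
    · rintro (h | h)
      · obtain ⟨i, k, rfl⟩ := exists_cyclePoint_eq p
        exact ⟨i, k, Or.inl ⟨rfl, Fin.ext (h.trans (cyclePoint_succ i k).symm)⟩⟩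
      · obtain ⟨i, k, rfl⟩ := exists_cyclePoint_eq q
        exact ⟨i, k, Or.inr ⟨rfl, Fin.ext (h.trans (cyclePoint_succ i k).symm)⟩⟩
    · rintro ⟨i, k, ⟨rfl, rfl⟩ | ⟨rfl, rfl⟩⟩
      · exact Or.inl (cyclePoint_succ i k)
      · exact Or.inr (cyclePoint_succ i k)
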